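/- For every ν₀ > 0 there exist ε₀ > 0 and C(ν₀) > 0 such that for all ε ∈ (0, ε₀) and every u ∈ H¹([−1,1]) one has ‖u‖²_{L^∞([−1,1])} ≤ ν₀ Q₁(u) + C(ν₀) ∫_{−1}^{1} u(r)² dr. -/

import Mathlib

open Filter MeasureTheory

/-- `f_B(ρ) = (ρ² − a²)(ρ² − b²)(2ρ² − a² − b²)`. -/
noncomputable def fB (a b ρ : ℝ) : ℝ :=
  (ρ ^ 2 - a ^ 2) * (ρ ^ 2 - b ^ 2) * (2 * ρ ^ 2 - a ^ 2 - b ^ 2)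

/-- The quadratic form `Q₁(u) = ∫_{−1}^{1} (u'(r)² + ε⁻² f_B(ρ₀(r/ε)) u(r)²) dr`, written for
a function `u` with (weak) derivative `g`. -/
noncomputable def Q1 (a b ε : ℝ) (ρ₀ u g : ℝ → ℝ) : ℝ :=
  ∫ r in (-1:ℝ)..1, ((g r) ^ 2 + (ε ^ 2)⁻¹ * fB a b (ρ₀ (r / ε)) * (u r) ^ 2)

lemma aux_prod (u g φ φ' : ℝ → ℝ) (c : ℝ) (hg : IntervalIntegrable g volume (-1) 1)
    (hu : ∀ x, u x = c + ∫ t in (-1:ℝ)..x, g t)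
    (hφ : ∀ x, HasDerivAt φ (φ' x) x) (hφ' : Continuous φ')
    (x y : ℝ) (hx : x ∈ Set.Icc (-1:ℝ) 1) (hy : y ∈ Set.Icc (-1:ℝ) 1) :
    ∫ t in y..x, (2 * u t * g t * φ t + u t ^ 2 * φ' t) = u x ^ 2 * φ x - u y ^ 2 * φ y := by
  have e : Set.uIcc (-1:ℝ) 1 = Set.Icc (-1) 1 := Set.uIcc_of_le (by norm_num)
  have hsub : Set.uIcc y x ⊆ Set.uIcc (-1:ℝ) 1 := by
    rw [e]; exact Set.uIcc_subset_Icc hy hx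
  have hu' : u = fun x => c + ∫ t in (-1:ℝ)..x, g t := funext hu
  have hc : AbsolutelyContinuousOnInterval (fun _ : ℝ => c) (-1) 1 :=
    (contDiff_const.contDiffOn).absolutelyContinuousOnInterval
  have hI := hg.absolutelyContinuousOnInterval_intervalIntegral (c := -1) (by simp)
  have hU : AbsolutelyContinuousOnInterval u (-1) 1 := by
    rw [hu']; exact hc.add hI
  have hφc : ContDiff ℝ 1 φ := by
    rw [contDiff_one_iff_deriv]
    refine ⟨fun x => (hφ x).differentiableAt, ?_⟩
    rwa [show deriv φ = φ' from funext fun x => (hφ x).deriv]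
  have hΦ : AbsolutelyContinuousOnInterval φ (-1) 1 :=
    hφc.contDiffOn.absolutelyContinuousOnInterval
  have hW := ((hU.mul hU).mul hΦ).mono hsub
  have := hW.integral_deriv_eq_sub
  rw [show u x ^ 2 * φ x - u y ^ 2 * φ y = (u * u * φ) x - (u * u * φ) y by
    simp [pow_two], ← this]
  apply intervalIntegral.integral_congr_ae
  filter_upwards [hg.ae_hasDerivAt_integral] with t ht htm
  have h1 := ht (hsub (Set.uIoc_subset_uIcc htm)) (-1) (by simp)
  have h2 : HasDerivAt u (g t) t := by rw [hu']; exact h1.const_add c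
  have h3 := (h2.mul h2).mul (hφ t)
  rw [h3.deriv]
  simp only [Pi.mul_apply]
  ring

lemma aux_main (u g θ h h' : ℝ → ℝ) (c a b ν δ : ℝ) (ha : 0 < a) (hab : a < b) (hν : 0 < ν)
    (hg : IntervalIntegrable g volume (-1) 1)
    (hg2 : IntervalIntegrable (fun r => (g r) ^ 2) volume (-1) 1)
    (hu : ∀ x, u x = c + ∫ t in (-1:ℝ)..x, g t)
    (hh : ∀ x, HasDerivAt h (h' x) x) (hh' : Continuous h')
    (hθ : ∀ x, HasDerivAt θ (h x * θ x) x)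
    (hθa : ∀ x, a ≤ θ x) (hθb : ∀ x, θ x ≤ b)
    (h1 : 0 ≤ h 1) (hδ : h (-1) ≤ δ) (hνδ : ν * δ ≤ 1)
    (x : ℝ) (hx : x ∈ Set.Icc (-1:ℝ) 1) :
    u x ^ 2 ≤ ν * (∫ r in (-1:ℝ)..1, ((g r) ^ 2 + (h' r + h r ^ 2) * (u r) ^ 2))
      + (b ^ 2 / a ^ 2 * (1 + 4 * b ^ 2 / (ν * a ^ 2))) * ∫ r in (-1:ℝ)..1, (u r) ^ 2 := by
  have e : Set.uIcc (-1:ℝ) 1 = Set.Icc (-1) 1 := Set.uIcc_of_le (by norm_num)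
  have hb : 0 < b := ha.trans hab
  have hθpos : ∀ x, 0 < θ x := fun x => ha.trans_le (hθa x)
  have hhc : Continuous h := continuous_iff_continuousAt.2 fun x => (hh x).continuousAt
  have hθc : Continuous θ := continuous_iff_continuousAt.2 fun x => (hθ x).continuousAt
  have hu' : u = fun x => c + ∫ t in (-1:ℝ)..x, g t := funext hu
  have huc : ContinuousOn u (Set.uIcc (-1:ℝ) 1) := by
    rw [hu']
    exact continuousOn_const.add
      (hg.absolutelyContinuousOnInterval_intervalIntegral (c := -1) (by simp)).continuousOn
  have iu2 : IntervalIntegrable (fun r => u r ^ 2) volume (-1) 1 := (huc.pow 2).intervalIntegrable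
  have iug : ∀ φ : ℝ → ℝ, Continuous φ →
      IntervalIntegrable (fun r => u r * φ r * g r) volume (-1) 1 := fun φ hφ =>
    hg.continuousOn_mul (huc.mul hφ.continuousOn)
  have iuu : ∀ φ : ℝ → ℝ, Continuous φ →
      IntervalIntegrable (fun r => u r ^ 2 * φ r) volume (-1) 1 := fun φ hφ =>
    ((huc.pow 2).mul hφ.continuousOn).intervalIntegrable
  set I := ∫ r in (-1:ℝ)..1, (u r) ^ 2 with hI
  set Q := ∫ r in (-1:ℝ)..1, ((g r) ^ 2 + (h' r + h r ^ 2) * (u r) ^ 2) with hQ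
  set P := ∫ r in (-1:ℝ)..1, (g r - h r * u r) ^ 2 with hP
  have ip : IntervalIntegrable (fun r => (g r - h r * u r) ^ 2) volume (-1) 1 := by
    have := (hg2.sub ((iug h hhc).const_mul 2)).add (iuu (fun r => h r ^ 2) (hhc.pow 2))
    refine this.congr (fun r _ => ?_)
    ring
  have hPQ : P = Q - u 1 ^ 2 * h 1 + u (-1) ^ 2 * h (-1) := by
    have hb1 := aux_prod u g h h' c hg hu hh hh' 1 (-1) (by simp) (by simp)
    have i2 : IntervalIntegrable (fun t => 2 * u t * g t * h t + u t ^ 2 * h' t)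
        volume (-1) 1 := by
      refine (((iug h hhc).const_mul 2).add (iuu h' hh')).congr (fun r _ => ?_)
      ring
    have : Q = P + ∫ t in (-1:ℝ)..1, (2 * u t * g t * h t + u t ^ 2 * h' t) := by
      rw [hP, hQ, ← intervalIntegral.integral_add ip i2]
      refine intervalIntegral.integral_congr (fun r _ => ?_)
      ring
    linarith
  have hP1 : P ≤ Q + δ * u (-1) ^ 2 := by
    have := mul_le_mul_of_nonneg_left hδ (sq_nonneg (u (-1)))
    have := mul_nonneg (sq_nonneg (u 1)) h1
    linarith
  set η := ν * a ^ 2 / (2 * b ^ 2) with hη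
  have hηpos : 0 < η := by positivity
  have key : ∀ x ∈ Set.Icc (-1:ℝ) 1, ∀ y ∈ Set.Icc (-1:ℝ) 1,
      u x ^ 2 ≤ b ^ 2 / a ^ 2 * (u y ^ 2 + (η * P + I / η)) := by
    intro x hx y hy
    set φ' : ℝ → ℝ := fun t => -2 * h t / θ t ^ 2 with hφ'
    have hφ : ∀ t, HasDerivAt (fun t => (θ t ^ 2)⁻¹) (φ' t) t := by
      intro t
      have := ((hθ t).pow 2).inv (by
        have := hθpos t
        simp only [Pi.pow_apply]
        positivity)
      refine this.congr_deriv ?_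
      have := (hθpos t).ne'
      simp only [hφ', Pi.pow_apply]
      field_simp
      push_cast
      ring
    have hφ'c : Continuous φ' := by
      refine (continuous_const.mul hhc).div (hθc.pow 2) (fun t => ?_)
      have := hθpos t
      positivity
    have h2 := aux_prod u g _ φ' c hg hu hφ hφ'c x y hx hy
    have iF : IntervalIntegrable (fun r => η * (g r - h r * u r) ^ 2 + u r ^ 2 / η)
        volume (-1) 1 := (ip.const_mul η).add (iu2.div_const η)
    have hFint : ∫ r in (-1:ℝ)..1, (η * (g r - h r * u r) ^ 2 + u r ^ 2 / η)
        = η * P + I / η := by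
      rw [intervalIntegral.integral_add (ip.const_mul η) (iu2.div_const η),
        intervalIntegral.integral_const_mul, intervalIntegral.integral_div]
    have hbound : ‖∫ t in y..x, (2 * u t * g t * (θ t ^ 2)⁻¹ + u t ^ 2 * φ' t)‖
        ≤ (a ^ 2)⁻¹ * (η * P + I / η) := by
      rw [← hFint, ← intervalIntegral.integral_const_mul,
        intervalIntegral.integral_of_le (by norm_num : (-1:ℝ) ≤ 1)]
      refine (intervalIntegral.norm_integral_le_integral_norm_uIoc).trans ?_
      have iF' := (intervalIntegrable_iff_integrableOn_Ioc_of_le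
        (by norm_num : (-1:ℝ) ≤ 1)).1 (iF.const_mul (a ^ 2)⁻¹)
      have hs : Set.uIoc y x ⊆ Set.Ioc (-1:ℝ) 1 := by
        rw [← Set.uIoc_of_le (by norm_num : (-1:ℝ) ≤ 1)]
        exact Set.uIoc_subset_uIoc_of_uIcc_subset_uIcc
          (by rw [e]; exact Set.uIcc_subset_Icc hy hx)
      refine (integral_mono_of_nonneg (ae_of_all _ fun t => norm_nonneg _)
        (iF'.mono_set hs) (ae_of_all _ fun t => ?_)).trans
        (setIntegral_mono_set iF' (ae_of_all _ fun t => ?_) (ae_of_all _ hs))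
      · have hp := hθpos t
        have : 2 * u t * g t * (θ t ^ 2)⁻¹ + u t ^ 2 * φ' t
            = (θ t ^ 2)⁻¹ * (2 * (g t - h t * u t) * u t) := by
          simp only [hφ']
          field_simp
          ring
        simp only [this]
        rw [norm_mul, Real.norm_eq_abs, Real.norm_eq_abs, abs_of_pos (by positivity)]
        have h3 : (θ t ^ 2)⁻¹ ≤ (a ^ 2)⁻¹ := by
          have := hθa t
          gcongr
        refine mul_le_mul h3 ?_ (abs_nonneg _) (by positivity)
        generalize g t - h t * u t = p
        have k1 : η * p ^ 2 + u t ^ 2 / η - 2 * p * u t = (η * p - u t) ^ 2 / η := by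
          field_simp
          ring
        have k2 : η * p ^ 2 + u t ^ 2 / η + 2 * p * u t = (η * p + u t) ^ 2 / η := by
          field_simp
          ring
        have k3 : 0 ≤ (η * p - u t) ^ 2 / η := by positivity
        have k4 : 0 ≤ (η * p + u t) ^ 2 / η := by positivity
        rw [abs_le]
        constructor <;> linarith
      · simp only [Pi.zero_apply]
        positivity
    rw [h2, Real.norm_eq_abs] at hbound
    have h4 := (abs_le.1 hbound).2
    have h5 : u y ^ 2 * (θ y ^ 2)⁻¹ ≤ u y ^ 2 * (a ^ 2)⁻¹ := by
      have := hθa y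
      gcongr
    have h6 : u x ^ 2 ≤ b ^ 2 * (u x ^ 2 * (θ x ^ 2)⁻¹) := by
      have hp := hθpos x
      have : θ x ^ 2 ≤ b ^ 2 := by have := hθb x; gcongr
      calc u x ^ 2 = θ x ^ 2 * (u x ^ 2 * (θ x ^ 2)⁻¹) := by field_simp
        _ ≤ _ := by gcongr
    calc u x ^ 2 ≤ _ := h6
      _ ≤ b ^ 2 * (u y ^ 2 * (a ^ 2)⁻¹ + (a ^ 2)⁻¹ * (η * P + I / η)) := by
        gcongr
        linarith
      _ = _ := by
        field_simp
  have key2 : ∀ x ∈ Set.Icc (-1:ℝ) 1,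
      u x ^ 2 ≤ ν / 2 * P + (b ^ 2 / a ^ 2 * (1 / 2 + 1 / η)) * I := by
    intro x hx
    have h3 := intervalIntegral.integral_mono_on (by norm_num : (-1:ℝ) ≤ 1)
      (intervalIntegrable_const (c := u x ^ 2))
      ((iu2.add (intervalIntegrable_const (c := η * P + I / η))).const_mul (b ^ 2 / a ^ 2))
      (fun y hy => key x hx y hy)
    rw [intervalIntegral.integral_const_mul,
      intervalIntegral.integral_add iu2 intervalIntegrable_const] at h3
    simp only [intervalIntegral.integral_const, smul_eq_mul] at h3
    rw [← hI] at h3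
    have h4 : b ^ 2 / a ^ 2 * η = ν / 2 := by
      rw [hη]; field_simp
    have : b ^ 2 / a ^ 2 * (I + (1 - -1) * (η * P + I / η))
      = 2 * (b ^ 2 / a ^ 2 * η * P + (b ^ 2 / a ^ 2 * (1 / 2 + 1 / η)) * I) := by ring
    rw [this, h4] at h3
    linarith
  have hK : b ^ 2 / a ^ 2 * (1 + 4 * b ^ 2 / (ν * a ^ 2))
      = 2 * (b ^ 2 / a ^ 2 * (1 / 2 + 1 / η)) := by
    rw [hη]; field_simp; ring
  rw [hK]
  set K := b ^ 2 / a ^ 2 * (1 / 2 + 1 / η)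
  have h3 := key2 x hx
  have h4 := key2 (-1) (by simp)
  have h5 := mul_le_mul_of_nonneg_left hP1 (by positivity : 0 ≤ ν / 2)
  have h6 := mul_le_mul_of_nonneg_right hνδ (sq_nonneg (u (-1)))
  linarith

lemma aux_decay (a b : ℝ) (ha : 0 < a) (hab : a < b) (ρ : ℝ → ℝ)
    (hd : ∀ z, HasDerivAt ρ (Real.sqrt 2 / 2 * ((ρ z) ^ 2 - a ^ 2) * (b ^ 2 - (ρ z) ^ 2)) z)
    (hbnd : ∀ z, a < ρ z ∧ ρ z < b) (κ : ℝ) (hκ : 0 < κ) :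
    ∃ ε₀ > (0:ℝ), ∀ ε ∈ Set.Ioo (0:ℝ) ε₀,
      ε⁻¹ * (Real.sqrt 2 / 2 * ((ρ (-1 / ε)) ^ 2 - a ^ 2) * (b ^ 2 - (ρ (-1 / ε)) ^ 2)
        / ρ (-1 / ε)) ≤ κ := by
  have hb : 0 < b := ha.trans hab
  have hs : 0 < Real.sqrt 2 / 2 := by positivity
  have hmono : Monotone ρ := monotone_of_hasDerivAt_nonneg hd (fun z => by
    obtain ⟨h1, h2⟩ := hbnd z
    have : 0 ≤ ρ z ^ 2 - a ^ 2 := by nlinarith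
    have : 0 ≤ b ^ 2 - ρ z ^ 2 := by nlinarith
    simp only [Pi.zero_apply]
    positivity)
  set k := Real.sqrt 2 / 2 * (2 * a) * (b ^ 2 - ρ 0 ^ 2) with hk
  have hkpos : 0 < k := by
    have : 0 < b ^ 2 - ρ 0 ^ 2 := by have := hbnd 0; nlinarith
    positivity
  have hexp : ∀ z ≤ 0, ρ z - a ≤ b * Real.exp (k * z) := by
    have hder : ∀ z, HasDerivAt (fun z => (ρ z - a) * Real.exp (-(k * z)))
        ((Real.sqrt 2 / 2 * ((ρ z) ^ 2 - a ^ 2) * (b ^ 2 - (ρ z) ^ 2)) * Real.exp (-(k * z))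
          + (ρ z - a) * (Real.exp (-(k * z)) * (-(k * 1)))) z := fun z =>
      ((hd z).sub_const a).mul (((hasDerivAt_id z).const_mul k).neg.exp)
    have hm : MonotoneOn (fun z => (ρ z - a) * Real.exp (-(k * z))) (Set.Iic 0) := by
      refine monotoneOn_of_deriv_nonneg (convex_Iic 0)
        (fun z _ => (hder z).continuousAt.continuousWithinAt)
        (fun z _ => (hder z).differentiableAt.differentiableWithinAt) (fun z hz => ?_)
      rw [interior_Iic] at hz
      rw [(hder z).deriv]
      obtain ⟨h1, h2⟩ := hbnd z
      have h3 : ρ z ≤ ρ 0 := hmono (le_of_lt hz)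
      have h4 : b ^ 2 - ρ 0 ^ 2 ≤ b ^ 2 - ρ z ^ 2 := by nlinarith
      have h5 : 0 ≤ b ^ 2 - ρ 0 ^ 2 := by have := hbnd 0; nlinarith
      have h7 : (2 * a) * (b ^ 2 - ρ 0 ^ 2) ≤ (ρ z + a) * (b ^ 2 - ρ z ^ 2) :=
        mul_le_mul (by linarith) h4 h5 (by linarith)
      have h6 : k * (ρ z - a) ≤ Real.sqrt 2 / 2 * ((ρ z) ^ 2 - a ^ 2) * (b ^ 2 - (ρ z) ^ 2) := by
        calc k * (ρ z - a) = Real.sqrt 2 / 2 * (ρ z - a) * ((2 * a) * (b ^ 2 - ρ 0 ^ 2)) := by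
              rw [hk]; ring
          _ ≤ Real.sqrt 2 / 2 * (ρ z - a) * ((ρ z + a) * (b ^ 2 - ρ z ^ 2)) :=
              mul_le_mul_of_nonneg_left h7 (mul_nonneg hs.le (by linarith))
          _ = _ := by ring
      have := mul_nonneg (sub_nonneg.2 h6) (Real.exp_pos (-(k * z))).le
      linarith
    intro z hz
    have h1 := hm (a := z) (b := 0) hz (by simp) hz
    simp only [mul_zero, neg_zero, Real.exp_zero, mul_one] at h1
    have h2 : (ρ z - a) * Real.exp (-(k * z)) ≤ b := by have := hbnd 0; linarith
    rw [Real.exp_neg, ← div_eq_mul_inv, div_le_iff₀ (Real.exp_pos _)] at h2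
    exact h2
  set M := Real.sqrt 2 / 2 * (2 * b) * b ^ 2 / a with hM
  have hMpos : 0 < M := by positivity
  have hT : Tendsto (fun s : ℝ => M * b * (s * Real.exp (-(k * s)))) atTop (nhds 0) := by
    have h1 := Real.tendsto_pow_mul_exp_neg_atTop_nhds_zero 1
    have h2 := h1.comp (tendsto_id.const_mul_atTop hkpos)
    have h3 := h2.const_mul (M * b / k)
    rw [mul_zero] at h3
    refine h3.congr (fun s => ?_)
    simp only [Function.comp, id, pow_one]
    field_simp
  obtain ⟨S, hS⟩ := eventually_atTop.1 (hT.eventually (eventually_le_nhds hκ))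
  refine ⟨(max S 1)⁻¹, by positivity, fun ε hε => ?_⟩
  have hε0 : 0 < ε := hε.1
  have h1 : S ≤ ε⁻¹ := by
    have := (lt_inv_comm₀ hε0 (by positivity)).1 hε.2
    exact (le_max_left _ _).trans this.le
  have h2 := hS _ h1
  have hz : (-1 / ε) = -ε⁻¹ := by rw [neg_div, one_div]
  rw [hz]
  have h3 := hexp (-ε⁻¹) (by simpa using hε0.le)
  rw [mul_neg] at h3
  set z := -ε⁻¹
  obtain ⟨h4, h5⟩ := hbnd z
  have h6 : Real.sqrt 2 / 2 * ((ρ z) ^ 2 - a ^ 2) * (b ^ 2 - (ρ z) ^ 2) / ρ z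
      ≤ M * (ρ z - a) := by
    have h8 : 0 ≤ ρ z - a := by linarith
    have h9 : (ρ z + a) * (b ^ 2 - ρ z ^ 2) ≤ (2 * b) * b ^ 2 :=
      mul_le_mul (by linarith) (by nlinarith) (by nlinarith) (by positivity)
    calc Real.sqrt 2 / 2 * ((ρ z) ^ 2 - a ^ 2) * (b ^ 2 - (ρ z) ^ 2) / ρ z
        = (Real.sqrt 2 / 2 * (ρ z - a)) * ((ρ z + a) * (b ^ 2 - ρ z ^ 2)) / ρ z := by ring
      _ ≤ (Real.sqrt 2 / 2 * (ρ z - a)) * ((2 * b) * b ^ 2) / a := by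
        gcongr
      _ = _ := by rw [hM]; ring
  calc ε⁻¹ * _ ≤ ε⁻¹ * (M * (b * Real.exp (-(k * ε⁻¹)))) := by
        gcongr
        exact h6.trans (by gcongr)
    _ = M * b * (ε⁻¹ * Real.exp (-(k * ε⁻¹))) := by ring
    _ ≤ κ := h2

/-- For every `ν₀ > 0` there exist `ε₀, C(ν₀) > 0` such that for all
`ε ∈ (0, ε₀)` and every `u ∈ H¹([−1,1])` (i.e. `u` absolutely continuous with derivative
`g ∈ L²([−1,1])`), one has `‖u‖²_{L^∞([−1,1])} ≤ ν₀ Q₁(u) + C(ν₀) ∫_{−1}^{1} u²`. -/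
theorem statement17 (a b α : ℝ) (ha : 0 < a) (hab : a < b)
    (hα : 0 < α)
    (hα' : α < min (Real.sqrt 2 * (b ^ 2 - a ^ 2) * a) (Real.sqrt 2 * (b ^ 2 - a ^ 2) * b))
    (ρ₀ : ℝ → ℝ) (hreg : ContDiff ℝ 1 ρ₀)
    (hderiv : ∀ z, deriv ρ₀ z =
      Real.sqrt 2 / 2 * ((ρ₀ z) ^ 2 - a ^ 2) * (b ^ 2 - (ρ₀ z) ^ 2))
    (hbnd : ∀ z, a < ρ₀ z ∧ ρ₀ z < b)
    (hbot : Filter.Tendsto ρ₀ Filter.atBot (nhds a))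
    (htop : Filter.Tendsto ρ₀ Filter.atTop (nhds b))
    (hnorm : b * Real.log ((ρ₀ 0 - a) / (ρ₀ 0 + a))
      - a * Real.log ((b - ρ₀ 0) / (b + ρ₀ 0)) = 0)
    (ν₀ : ℝ) (hν₀ : 0 < ν₀) :
    ∃ ε₀ > (0:ℝ), ∃ C > (0:ℝ), ∀ ε ∈ Set.Ioo (0:ℝ) ε₀, ∀ u g : ℝ → ℝ,
      IntervalIntegrable g volume (-1) 1 →
      IntervalIntegrable (fun r => (g r) ^ 2) volume (-1) 1 →
      (∀ x ∈ Set.Icc (-1:ℝ) 1, u x = u (-1) + ∫ t in (-1:ℝ)..x, g t) →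
      ∀ x ∈ Set.Icc (-1:ℝ) 1,
        (u x) ^ 2 ≤ ν₀ * Q1 a b ε ρ₀ u g + C * ∫ r in (-1:ℝ)..1, (u r) ^ 2 := by
  have hb : 0 < b := ha.trans hab
  have hd : ∀ z, HasDerivAt ρ₀
      (Real.sqrt 2 / 2 * ((ρ₀ z) ^ 2 - a ^ 2) * (b ^ 2 - (ρ₀ z) ^ 2)) z := fun z => by
    rw [← hderiv]
    exact (hreg.differentiable (by norm_num) z).hasDerivAt
  obtain ⟨ε₀, hε₀, hdec⟩ := aux_decay a b ha hab ρ₀ hd hbnd ν₀⁻¹ (by positivity)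
  refine ⟨ε₀, hε₀, b ^ 2 / a ^ 2 * (1 + 4 * b ^ 2 / (ν₀ * a ^ 2)), by positivity, ?_⟩
  intro ε hε u g hg hg2 hu x hx
  have hε0 : 0 < ε := hε.1
  have hρpos : ∀ z, 0 < ρ₀ z := fun z => ha.trans (hbnd z).1
  have hρc : Continuous ρ₀ := hreg.continuous
  set H : ℝ → ℝ := fun z =>
    Real.sqrt 2 / 2 * ((ρ₀ z) ^ 2 - a ^ 2) * (b ^ 2 - (ρ₀ z) ^ 2) / ρ₀ z with hH
  have hHc : Continuous H := by
    refine Continuous.div (by fun_prop) hρc (fun z => (hρpos z).ne')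
  have hHd : ∀ z, HasDerivAt H (fB a b (ρ₀ z) - H z ^ 2) z := by
    intro z
    have h1 := ((((hd z).pow 2).sub_const (a ^ 2)).const_mul (Real.sqrt 2 / 2)).mul
      (((hd z).pow 2).const_sub (b ^ 2))
    have h2 := h1.div (hd z) (hρpos z).ne'
    refine h2.congr_deriv ?_
    have := (hρpos z).ne'
    have hs : Real.sqrt 2 ^ 2 = 2 := Real.sq_sqrt (by norm_num)
    simp only [hH, fB, Pi.mul_apply, Pi.pow_apply]
    field_simp
    ring_nf
    simp only [hs]
    ring
  set U : ℝ → ℝ := fun x => u (-1) + ∫ t in (-1:ℝ)..x, g t with hU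
  have hsc : ∀ x : ℝ, HasDerivAt (fun r : ℝ => r / ε) ε⁻¹ x := fun x => by
    simpa using (hasDerivAt_id x).div_const ε
  have hHs : ∀ x : ℝ, HasDerivAt (fun r => ε⁻¹ * H (r / ε))
      (ε⁻¹ * ((fB a b (ρ₀ (x / ε)) - H (x / ε) ^ 2) * ε⁻¹)) x := fun x => by
    have h1 : HasDerivAt (fun r => H (r / ε)) ((fB a b (ρ₀ (x / ε)) - H (x / ε) ^ 2) * ε⁻¹) x :=
      HasDerivAt.comp x (h₂ := H) (hHd (x / ε)) (hsc x)
    exact h1.const_mul ε⁻¹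
  have main := aux_main U g (fun r => ρ₀ (r / ε)) (fun r => ε⁻¹ * H (r / ε))
    (fun r => ε⁻¹ * ((fB a b (ρ₀ (r / ε)) - H (r / ε) ^ 2) * ε⁻¹)) (u (-1)) a b ν₀ ν₀⁻¹
    ha hab hν₀ hg hg2 (fun _ => rfl)
    (fun x => hHs x)
    (by unfold fB; fun_prop)
    (fun x => ((hd (x / ε)).comp x (hsc x)).congr_deriv (by
      have := (hρpos (x / ε)).ne'
      simp only [hH]
      field_simp))
    (fun x => (hbnd _).1.le) (fun x => (hbnd _).2.le)
    (by
      obtain ⟨h1, h2⟩ := hbnd (1 / ε)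
      have h3 := hρpos (1 / ε)
      have : 0 ≤ ρ₀ (1 / ε) ^ 2 - a ^ 2 := by nlinarith
      have : 0 ≤ b ^ 2 - ρ₀ (1 / ε) ^ 2 := by nlinarith
      simp only [hH]
      positivity)
    (hdec ε hε) (by rw [mul_inv_cancel₀ hν₀.ne']) x hx
  have e : Set.uIcc (-1:ℝ) 1 = Set.Icc (-1) 1 := Set.uIcc_of_le (by norm_num)
  have hQ : Q1 a b ε ρ₀ u g = ∫ r in (-1:ℝ)..1, ((g r) ^ 2 +
      ((ε⁻¹ * ((fB a b (ρ₀ (r / ε)) - H (r / ε) ^ 2) * ε⁻¹)) + (ε⁻¹ * H (r / ε)) ^ 2)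
        * (U r) ^ 2) := by
    unfold Q1
    refine intervalIntegral.integral_congr (fun r hr => ?_)
    rw [e] at hr
    simp only [hU, ← hu r hr]
    ring
  have hI : ∫ r in (-1:ℝ)..1, (u r) ^ 2 = ∫ r in (-1:ℝ)..1, (U r) ^ 2 := by
    refine intervalIntegral.integral_congr (fun r hr => ?_)
    rw [e] at hr
    simp only [hU, ← hu r hr]
  rw [hQ, hI, hu x hx]
  exact main
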